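/- arXiv:2006.07927 — 2 statements merged into one kernel-verified Lean document; each statement's English description precedes it below -/
import Mathlib

section
/- For every integer m ≥ 1, q_KL − q̂_m > 0.265 · q_KL^{−2^m} > q_KL^{−(2^m+3)}; moreover, for every integer m ≥ 2, q_KL − q̂_m > q_KL^{−3·2^{m−1}}. -/
/-!
Write `s = 1/q_KL`, `r = 1/q̂_m`, `N = 2^m` and `P_N(t) = ∑_{i=1}^N τ_i t^i`, so that `P_N(r) = 1`
and `P_N(s) = 1 - T`, where `T` is the tail of the Komornik–Loreti series after `N` terms.

Since the block `τ_{N+1}, …, τ_{2N}` is the reflection of `τ_1, …, τ_N` except for its last digit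
(which is `1`), the inequality `P_{2N}(s) ≤ 1` rearranges to `T ≥ (1/(q_KL - 1) - 1) s^N`
(`tmPoly_le_one_sub`). On the other hand `r^i - s^i ≤ i r^(i-1) (r - s)` gives
`T = P_N(r) - P_N(s) ≤ (q_KL - q̂_m) s ∑ i τ_i r^i`. If the gap were at most `0.265 s^N` with
`m ≥ 4`, then `r ≤ 1/1.787`, and the weighted sum would be too small for both bounds to hold
(`weighted_sum_le`, `gap_of_four_le`).

The margin is about one per cent, so `q_KL` has to be located: `1.7872 < q_KL < 1.7875`
(`s_lt`, `lt_s`), from the first sixteen digits. This localisation also settles `m = 1, 2, 3`,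
where an upper bound for the root `q̂_m` of an explicit polynomial is enough. The remaining
inequalities compare `s^3`, `s^4` with `0.265`, apart from the last claim at `m = 2`, which is
again numerical.
-/

open Filter Set

noncomputable section

/-- `d` is a `q`-expansion of `x`: all digits lie in `{0,1}` and
`x = ∑_{i=1}^∞ d_i q^{-i}`.  Here `d i` stands for the digit `d_{i+1}`. -/
def IsExpansion (q x : ℝ) (d : ℕ → ℕ) : Prop :=
  (∀ i, d i ≤ 1) ∧ x = ∑' i : ℕ, (d i : ℝ) / q ^ (i + 1)

/-- `𝒰(x)`: the set of bases `q ∈ (1,2]` in which `x` has a unique expansion. -/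
def UnivSet (x : ℝ) : Set ℝ :=
  {q | q ∈ Set.Ioc (1 : ℝ) 2 ∧ ∃! d : ℕ → ℕ, IsExpansion q x d}

/-- `q_s(x) = inf 𝒰(x)`. -/
def qs (x : ℝ) : ℝ := sInf (UnivSet x)

/-- The level set `L(q) = {x > 0 : q_s(x) = q}`. -/
def levelSet (q : ℝ) : Set ℝ := {x | 0 < x ∧ qs x = q}

/-- The golden ratio `q_G = (1+√5)/2`. -/
def qG : ℝ := (1 + Real.sqrt 5) / 2

/-- The Thue–Morse sequence: `tm i = s_i mod 2`, where `s_i` is the number of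
`1`s in the binary representation of `i`. -/
def tm (i : ℕ) : ℕ := (Nat.digits 2 i).sum % 2

/-- The set `S ⊆ ℕ`: `2, 3, 4 ∈ S`, and for `k ≥ 2` and `2^k < n ≤ 2^{k+1}`,
`n ∈ S` iff `n > 3·2^{k-1}` and `n - 3·2^{k-1} ∈ S`; no other elements. -/
inductive memS : ℕ → Prop
  | two : memS 2
  | three : memS 3
  | four : memS 4
  | step (k n : ℕ) (hk : 2 ≤ k) (h1 : 2 ^ k < n) (h2 : n ≤ 2 ^ (k + 1))
      (h3 : 3 * 2 ^ (k - 1) < n) (h : memS (n - 3 * 2 ^ (k - 1))) : memS n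

/-- The polynomial `P_N(t) = ∑_{i=1}^N τ_i t^i`; its value at `t = 1/q` is the truncated
Thue–Morse sum in base `q`. -/
def tmPoly (N : ℕ) (t : ℝ) : ℝ := ∑ i ∈ Finset.range N, (tm (i + 1) : ℝ) * t ^ (i + 1)

/-! ### Digits of the Thue–Morse sequence -/

lemma tm_le_one (n : ℕ) : tm n ≤ 1 := by
  unfold tm; omega

lemma tm_cast_le_one (n : ℕ) : (tm n : ℝ) ≤ 1 := by exact_mod_cast tm_le_one n

lemma tm_two_mul (n : ℕ) : tm (2 * n) = tm n := by
  rcases Nat.eq_zero_or_pos n with rfl | h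
  · rfl
  · unfold tm
    rw [Nat.digits_def' (by norm_num) (by omega)]
    simp

lemma tm_two_mul_add_one (n : ℕ) : tm (2 * n + 1) + tm n = 1 := by
  unfold tm
  rw [Nat.digits_def' (by norm_num) (by omega), List.sum_cons,
    show (2 * n + 1) % 2 = 1 by omega, show (2 * n + 1) / 2 = n by omega]
  omega

lemma tm_two_pow (m : ℕ) : tm (2 ^ m) = 1 := by
  induction m with
  | zero => simp [tm]
  | succ k ih => rw [pow_succ', tm_two_mul, ih]

/-- Adding `2^m` to a number below `2^m` flips its Thue–Morse digit. -/
lemma tm_two_pow_add (m i : ℕ) (hi : i < 2 ^ m) : tm (2 ^ m + i) + tm i = 1 := by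
  induction m generalizing i with
  | zero =>
    obtain rfl : i = 0 := by simpa using hi
    simp [tm]
  | succ k ih =>
    have hp : 2 ^ (k + 1) = 2 * 2 ^ k := pow_succ' 2 k
    obtain ⟨j, rfl | rfl⟩ := Nat.even_or_odd' i
    · have := ih j (by omega)
      rwa [hp, ← mul_add, tm_two_mul, tm_two_mul]
    · have := ih j (by omega)
      have h1 := tm_two_mul_add_one j
      have h2 := tm_two_mul_add_one (2 ^ k + j)
      rw [hp, show 2 * 2 ^ k + (2 * j + 1) = 2 * (2 ^ k + j) + 1 by ring]
      omega

/-! ### The truncated sums -/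

lemma tmPoly_mono_arg (N : ℕ) {a b : ℝ} (ha : 0 ≤ a) (hab : a ≤ b) : tmPoly N a ≤ tmPoly N b := by
  unfold tmPoly
  gcongr

lemma tmPoly_eight (t : ℝ) : tmPoly 8 t = t + t ^ 2 + t ^ 4 + t ^ 7 + t ^ 8 := by
  simp [tmPoly, Finset.sum_range_succ, tm]

lemma tmPoly_four (t : ℝ) : tmPoly 4 t = t + t ^ 2 + t ^ 4 := by
  simp [tmPoly, Finset.sum_range_succ, tm]

lemma tmPoly_two (t : ℝ) : tmPoly 2 t = t + t ^ 2 := by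
  simp [tmPoly, Finset.sum_range_succ, tm]

lemma tmPoly_sixteen (t : ℝ) : tmPoly 16 t =
    t + t ^ 2 + t ^ 4 + t ^ 7 + t ^ 8 + t ^ 11 + t ^ 13 + t ^ 14 + t ^ 16 := by
  simp [tmPoly, Finset.sum_range_succ, tm]

/-- Doubling formula: the second block of `2^m` digits is the reflection of the first one, except
that its last digit is `1` instead of `0`; the latter accounts for the term `t^(2^m)`. -/
lemma tmPoly_double (m : ℕ) (t : ℝ) :
    tmPoly (2 ^ m + 2 ^ m) t = tmPoly (2 ^ m) t + t ^ (2 ^ m) *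
      (∑ i ∈ Finset.range (2 ^ m), t ^ (i + 1) - tmPoly (2 ^ m) t + t ^ (2 ^ m)) := by
  unfold tmPoly
  rw [Finset.sum_range_add]
  congr 1
  obtain ⟨n, hn⟩ : ∃ n, 2 ^ m = n + 1 := ⟨2 ^ m - 1, by have := Nat.two_pow_pos m; omega⟩
  have hl : tm (n + 1) = 1 := hn ▸ tm_two_pow m
  have hl2 : tm (n + 1 + n + 1) = 1 := by
    rw [show n + 1 + n + 1 = 2 * (n + 1) by ring, tm_two_mul, hl]
  have key : ∀ i ∈ Finset.range n, (tm (n + 1 + i + 1) : ℝ) * t ^ (n + 1 + i + 1)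
      = t ^ (n + 1) * (t ^ (i + 1) - (tm (i + 1) : ℝ) * t ^ (i + 1)) := by
    intro i hi
    have h := tm_two_pow_add m (i + 1) (by have := Finset.mem_range.1 hi; omega)
    rw [hn, ← add_assoc] at h
    have h' : (tm (n + 1 + i + 1) : ℝ) = 1 - tm (i + 1) := by
      have : (tm (n + 1 + i + 1) : ℝ) + tm (i + 1) = 1 := by exact_mod_cast h
      linarith
    rw [h']; ring
  rw [hn, Finset.sum_range_succ, Finset.sum_congr rfl key, ← Finset.mul_sum,
    Finset.sum_sub_distrib, Finset.sum_range_succ _ n, Finset.sum_range_succ _ n, hl, hl2]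
  push_cast
  ring

/-- The tail of the Komornik–Loreti series after `2^m` terms is at least
`(1/(q-1) - 1) s^(2^m)`, where `s = 1/q` and hence `1/(q-1) = s/(1-s)`. -/
lemma tmPoly_le_one_sub (m : ℕ) {s : ℝ} (hs0 : 0 < s) (hs1 : s < 1)
    (h : tmPoly (2 ^ m + 2 ^ m) s ≤ 1) :
    tmPoly (2 ^ m) s ≤ 1 - (s / (1 - s) - 1) * s ^ (2 ^ m) := by
  rw [tmPoly_double] at h
  have hg : ∑ i ∈ Finset.range (2 ^ m), s ^ (i + 1) = (1 - s ^ (2 ^ m)) * (s / (1 - s)) := by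
    simp_rw [pow_succ]
    rw [← Finset.sum_mul, geom_sum_eq hs1.ne, ← neg_div_neg_eq, neg_sub, neg_sub]
    ring
  rw [hg] at h
  have hp : s ^ (2 ^ m) < 1 := pow_lt_one₀ hs0.le hs1 (by positivity)
  generalize s ^ (2 ^ m) = p at *
  generalize s / (1 - s) = c at *
  generalize tmPoly (2 ^ m) s = F at *
  have : F * (1 - p) ≤ (1 - (c - 1) * p) * (1 - p) := by nlinarith
  exact le_of_mul_le_mul_right this (by linarith)

/-- The partial sum plus the geometric majorant of what follows does not increase with the number
of terms; `s / (1 - s)` is `∑_{i≥1} s^i`. -/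
lemma tail_le (n : ℕ) {s : ℝ} (hs0 : 0 < s) (hs1 : s < 1) :
    tmPoly (16 + n) s + s ^ (16 + n) * (s / (1 - s)) ≤ tmPoly 16 s + s ^ 16 * (s / (1 - s)) := by
  induction n with
  | zero => simp
  | succ k ih =>
    refine le_trans ?_ ih
    have h1 : tmPoly (16 + (k + 1)) s
        = tmPoly (16 + k) s + (tm (16 + k + 1) : ℝ) * s ^ (16 + k + 1) := by
      unfold tmPoly
      rw [← add_assoc, Finset.sum_range_succ]
    have h2 : s ^ (16 + k) * (s / (1 - s))
        = s ^ (16 + k + 1) + s ^ (16 + (k + 1)) * (s / (1 - s)) := by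
      have : 1 - s ≠ 0 := by linarith
      rw [← add_assoc, pow_succ _ (16 + k)]
      field_simp
      ring
    have h3 := mul_le_mul_of_nonneg_right (tm_cast_le_one (16 + k + 1))
      (pow_pos hs0 (16 + k + 1)).le
    linarith

/-! ### Locating the Komornik–Loreti constant -/

lemma s_lt {s : ℝ} (h : tmPoly 16 s ≤ 1) : s < 1 / 1.7872 := by
  by_contra! hc
  have := tmPoly_mono_arg 16 (by norm_num) hc
  rw [tmPoly_sixteen (1 / 1.7872)] at this
  norm_num at this
  linarith

/-- If `s ≤ 1/1.7875`, sixteen digits plus the geometric bound on the remaining ones stay below `1`. -/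
lemma lt_s {s : ℝ} (hs0 : 0 < s) (hs1 : s < 1)
    (hsum : ∑' i : ℕ, (tm (i + 1) : ℝ) * s ^ (i + 1) = 1) : 1 / 1.7875 < s := by
  by_contra! hc
  have hq : s / (1 - s) ≤ 1 / 0.7875 := by
    rw [div_le_div_iff₀ (by linarith) (by norm_num)]
    norm_num at hc
    linarith
  have hq0 : 0 ≤ s / (1 - s) := div_nonneg hs0.le (by linarith)
  have hb : ∑' i : ℕ, (tm (i + 1) : ℝ) * s ^ (i + 1) ≤
      tmPoly 16 s + s ^ 16 * (s / (1 - s)) := by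
    refine Real.tsum_le_of_sum_range_le (fun i => by positivity) (fun n => ?_)
    calc tmPoly n s ≤ tmPoly (16 + n) s := by
          unfold tmPoly
          exact Finset.sum_le_sum_of_subset_of_nonneg (Finset.range_mono (by omega))
            (fun i _ _ => by positivity)
      _ ≤ _ := by
          have := tail_le n hs0 hs1
          have : 0 ≤ s ^ (16 + n) * (s / (1 - s)) := by positivity
          linarith
  have h1 := tmPoly_mono_arg 16 hs0.le hc
  have h2 : s ^ 16 * (s / (1 - s)) ≤ (1 / 1.7875) ^ 16 * (1 / 0.7875) := by gcongr
  rw [tmPoly_sixteen (1 / 1.7875)] at h1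
  norm_num at h1 h2
  linarith

/-! ### The gap for large `m` -/

/-- The constants come from `∑_{i ≥ 17} i x^i ≤ 42 x^17` for `x ≤ 0.56`; the subtracted
term makes the tail estimate provable by induction on the number of terms. -/
lemma weighted_tail_le (n : ℕ) {r : ℝ} (hr0 : 0 ≤ r) (hr : r ≤ 0.56) :
    ∑ i ∈ Finset.range n, (17 + i : ℝ) * r ^ i ≤ 42 - (2.3 * n + 42) * r ^ n := by
  induction n with
  | zero => simp
  | succ k ih =>
    rw [Finset.sum_range_succ, pow_succ]
    push_cast
    have hk : (0 : ℝ) ≤ k := by positivity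
    have h : (17 + k : ℝ) ≤ (2.3 * k + 42) - (2.3 * (k + 1) + 42) * r := by nlinarith
    have := mul_le_mul_of_nonneg_right h (pow_nonneg hr0 k)
    linarith

lemma weighted_sum_le (n : ℕ) {r : ℝ} (hr0 : 0 ≤ r) (hr : r ≤ 1 / 1.787) :
    ∑ i ∈ Finset.range (16 + n), (tm (i + 1) : ℝ) * ((i + 1 : ℕ) * r ^ (i + 1)) ≤ 1.809 := by
  rw [Finset.sum_range_add]
  have h1 : ∑ i ∈ Finset.range 16, (tm (i + 1) : ℝ) * ((i + 1 : ℕ) * r ^ (i + 1)) ≤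
      ∑ i ∈ Finset.range 16, (tm (i + 1) : ℝ) * ((i + 1 : ℕ) * (1 / 1.787) ^ (i + 1)) := by
    gcongr
  have h2 : ∑ i ∈ Finset.range n, (tm (16 + i + 1) : ℝ) * ((16 + i + 1 : ℕ) * r ^ (16 + i + 1)) ≤
      r ^ 17 * 42 := by
    calc _ ≤ ∑ i ∈ Finset.range n, r ^ 17 * ((17 + i : ℝ) * r ^ i) := by
          refine Finset.sum_le_sum fun i _ => ?_
          calc _ ≤ 1 * (((16 + i + 1 : ℕ) : ℝ) * r ^ (16 + i + 1)) := by
                gcongr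
                exact tm_cast_le_one _
            _ = _ := by push_cast; ring
      _ ≤ r ^ 17 * 42 := by
          rw [← Finset.mul_sum]
          gcongr
          have := weighted_tail_le n hr0 (hr.trans (by norm_num))
          have : 0 ≤ (2.3 * n + 42 : ℝ) * r ^ n := by positivity
          linarith
  have h3 : r ^ 17 * 42 ≤ (1 / 1.787) ^ 17 * 42 := by gcongr
  have h4 : ∑ i ∈ Finset.range 16, (tm (i + 1) : ℝ) * ((i + 1 : ℕ) * (1 / 1.787) ^ (i + 1)) ≤
      1.8065 := by
    simp only [Finset.sum_range_succ, tm]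
    norm_num
  have h5 : (1 / 1.787 : ℝ) ^ 17 * 42 ≤ 0.0023 := by norm_num
  linarith

lemma pow_sub_pow_le {r s : ℝ} (hs : 0 ≤ s) (hsr : s ≤ r) (i : ℕ) :
    r ^ (i + 1) - s ^ (i + 1) ≤ (r - s) * ((i + 1 : ℕ) * r ^ i) := by
  have hr := hs.trans hsr
  rw [← Commute.mul_geom_sum₂ (Commute.all r s)]
  refine mul_le_mul_of_nonneg_left ?_ (by linarith)
  calc _ ≤ ∑ j ∈ Finset.range (i + 1), r ^ i := by
        refine Finset.sum_le_sum fun j hj => ?_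
        have hj := Finset.mem_range.1 hj
        calc r ^ j * s ^ (i + 1 - 1 - j) ≤ r ^ j * r ^ (i + 1 - 1 - j) := by gcongr
          _ = r ^ i := by rw [← pow_add]; congr 1; omega
    _ = _ := by simp

/-- The mean value estimate `P_N(1/p) - P_N(1/q) ≤ (q - p) q⁻¹ ∑ i τ_i p^(-i)`. -/
lemma tmPoly_sub_le (N : ℕ) {p q : ℝ} (hp : 0 < p) (hpq : p ≤ q) :
    tmPoly N p⁻¹ - tmPoly N q⁻¹ ≤ (q - p) * q⁻¹ *
      ∑ i ∈ Finset.range N, (tm (i + 1) : ℝ) * ((i + 1 : ℕ) * p⁻¹ ^ (i + 1)) := by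
  have hq : 0 < q := hp.trans_le hpq
  unfold tmPoly
  rw [← Finset.sum_sub_distrib, Finset.mul_sum]
  refine Finset.sum_le_sum fun i _ => ?_
  rw [← mul_sub]
  have h := pow_sub_pow_le (inv_nonneg.2 hq.le) ((inv_le_inv₀ hq hp).2 hpq) i
  have e : p⁻¹ - q⁻¹ = (q - p) * q⁻¹ * p⁻¹ := by field_simp
  rw [e] at h
  calc _ ≤ (tm (i + 1) : ℝ) * ((q - p) * q⁻¹ * p⁻¹ * ((i + 1 : ℕ) * p⁻¹ ^ i)) := by gcongr
    _ = _ := by ring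

/-- A gap of at most `0.265 q^(-2^m)` would force `p ≥ 1.787`, hence `T ≤ 0.2683 q^(-2^m)` for the
tail `T` by the mean value estimate, against `T ≥ 0.2698 q^(-2^m)`. -/
lemma gap_of_four_le {q p : ℝ} {m : ℕ} (hm : 4 ≤ m) (hq1 : 1.7872 < q) (hq2 : q < 1.7875)
    (hp : 0 < p) (hroot : tmPoly (2 ^ m) p⁻¹ = 1)
    (hpart : tmPoly (2 ^ m + 2 ^ m) q⁻¹ ≤ 1) : 0.265 * q⁻¹ ^ (2 ^ m) < q - p := by
  have hq0 : 0 < q := by linarith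
  have hs0 : 0 < q⁻¹ := inv_pos.2 hq0
  have hs1 : q⁻¹ < 1 := inv_lt_one_of_one_lt₀ (by linarith)
  have hs : q⁻¹ < 1 / 1.7872 := by
    rw [one_div]; exact (inv_lt_inv₀ hq0 (by norm_num)).2 hq1
  have hT := tmPoly_le_one_sub m hs0 hs1 hpart
  have hc : q⁻¹ / (1 - q⁻¹) - 1 > 0.2698 := by
    have : q⁻¹ / (1 - q⁻¹) = 1 / (q - 1) := by
      have : q - 1 ≠ 0 := by linarith
      field_simp
    rw [this, gt_iff_lt, lt_sub_iff_add_lt, lt_div_iff₀ (by linarith)]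
    linarith
  have hpos : 0 < q⁻¹ ^ (2 ^ m) := by positivity
  have hN : 16 ≤ 2 ^ m := by
    calc 16 = 2 ^ 4 := by norm_num
      _ ≤ 2 ^ m := Nat.pow_le_pow_right (by norm_num) hm
  by_contra! hgap
  have hsmall : q⁻¹ ^ (2 ^ m) ≤ (1 / 1.7872) ^ 16 :=
    (pow_le_pow_of_le_one hs0.le hs1.le hN).trans (by gcongr)
  have hsmall2 : (1 / 1.7872 : ℝ) ^ 16 ≤ 0.0002 := by norm_num
  have hp2 : 1.787 ≤ p := by linarith
  obtain ⟨n, hn⟩ := Nat.exists_eq_add_of_le hN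
  have hpq : p ≤ q := by
    by_contra! h
    have := tmPoly_mono_arg (2 ^ m) (inv_pos.2 hp).le ((inv_le_inv₀ hp hq0).2 h.le)
    nlinarith
  have hD := tmPoly_sub_le (2 ^ m) hp hpq
  have hK := weighted_sum_le n (inv_pos.2 hp).le
    (by rw [one_div]; exact (inv_le_inv₀ hp (by norm_num)).2 hp2)
  rw [← hn] at hK
  have h1 : tmPoly (2 ^ m) p⁻¹ - tmPoly (2 ^ m) q⁻¹
      ≤ (0.265 * q⁻¹ ^ (2 ^ m)) * (1 / 1.7872) * 1.809 := by
    refine hD.trans ?_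
    have : 0 ≤ q - p := by linarith
    gcongr
  rw [hroot] at h1
  have h2 := mul_lt_mul_of_pos_right hc hpos
  generalize q⁻¹ ^ (2 ^ m) = x at *
  norm_num at h1 h2
  linarith

/-! ### Small `m` and conclusion -/

/-- An upper bound for a root `p` of `P_N(1/p) = 1`, by monotonicity. -/
lemma root_lt {N : ℕ} {p b : ℝ} (hb : 0 < b) (hp : 0 < p) (hroot : tmPoly N p⁻¹ = 1)
    (h : tmPoly N b⁻¹ < 1) : p < b := by
  by_contra! hc
  have := tmPoly_mono_arg N (inv_pos.2 hp).le ((inv_le_inv₀ hp hb).2 hc)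
  linarith

/-- `q_KL - q̂_m > 0.265 · q_KL^{-2^m} > q_KL^{-(2^m+3)}` for
`m ≥ 1`, and `q_KL - q̂_m > q_KL^{-3·2^{m-1}}` for `m ≥ 2`. -/
theorem qKL_qhat_gap (qKL : ℝ) (hKL : qKL ∈ Set.Ioo (1 : ℝ) 2)
    (hKLsum : ∑' i : ℕ, (tm (i + 1) : ℝ) / qKL ^ (i + 1) = 1)
    (m : ℕ) (qm : ℝ) (hqm : qm ∈ Set.Ioo (1 : ℝ) 2)
    (heqm : ∑ i ∈ Finset.range (2 ^ m), (tm (i + 1) : ℝ) / qm ^ (i + 1) = 1) :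
    (1 ≤ m → 0.265 * qKL ^ (-(2 ^ m : ℤ)) < qKL - qm ∧
      qKL ^ (-((2 ^ m : ℤ) + 3)) < 0.265 * qKL ^ (-(2 ^ m : ℤ))) ∧
    (2 ≤ m → qKL ^ (-(3 * 2 ^ (m - 1) : ℤ)) < qKL - qm) := by
  obtain ⟨hq1, -⟩ := hKL
  have hp : 0 < qm := by linarith [hqm.1]
  have hq0 : 0 < qKL := by linarith
  have hs0 : 0 < qKL⁻¹ := inv_pos.2 hq0
  have hs1 : qKL⁻¹ < 1 := inv_lt_one_of_one_lt₀ hq1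
  have hsum : ∑' i : ℕ, (tm (i + 1) : ℝ) * qKL⁻¹ ^ (i + 1) = 1 := by
    rw [← hKLsum]
    simp [div_eq_mul_inv]
  have hroot : tmPoly (2 ^ m) qm⁻¹ = 1 := by
    rw [← heqm]
    simp [tmPoly, div_eq_mul_inv]
  have hsummable : Summable fun i : ℕ => (tm (i + 1) : ℝ) * qKL⁻¹ ^ (i + 1) := by
    -- A non-summable series would have the junk value `0`.
    by_contra h
    rw [tsum_eq_zero_of_not_summable h] at hsum
    norm_num at hsum
  have hpart : ∀ N, tmPoly N qKL⁻¹ ≤ 1 := fun N => by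
    rw [← hsum]
    exact hsummable.sum_le_tsum _ (fun i _ => by positivity)
  have hs2 := s_lt (hpart 16)
  have hlow : 1.7872 < qKL := by
    rw [one_div] at hs2
    exact (inv_lt_inv₀ hq0 (by norm_num)).1 hs2
  have hup : qKL < 1.7875 := by
    have h := lt_s hs0 hs1 hsum
    rw [one_div] at h
    exact (inv_lt_inv₀ (by norm_num) hq0).1 h
  have hpow : ∀ n, qKL⁻¹ ^ n ≤ (1 / 1.7872) ^ n := fun n => by gcongr
  have hzpow : ∀ n : ℕ, qKL ^ (-(n : ℤ)) = qKL⁻¹ ^ n := fun n => by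
    rw [zpow_neg, zpow_natCast, inv_pow]
  have e1 : qKL ^ (-(2 ^ m : ℤ)) = qKL⁻¹ ^ (2 ^ m) := by
    rw [← hzpow]; push_cast; rfl
  have e2 : qKL ^ (-((2 ^ m : ℤ) + 3)) = qKL⁻¹ ^ (2 ^ m) * qKL⁻¹ ^ 3 := by
    rw [← pow_add, ← hzpow]; push_cast; rfl
  have e3 : qKL ^ (-(3 * 2 ^ (m - 1) : ℤ)) = qKL⁻¹ ^ (3 * 2 ^ (m - 1)) := by
    rw [← hzpow]; push_cast; rfl
  rw [e1, e2, e3]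
  have hgap : 1 ≤ m → 0.265 * qKL⁻¹ ^ (2 ^ m) < qKL - qm := by
    intro hm
    by_cases h4 : 4 ≤ m
    · exact gap_of_four_le h4 hlow hup hp hroot (hpart _)
    have h := hpow (2 ^ m)
    obtain rfl | rfl | rfl : m = 1 ∨ m = 2 ∨ m = 3 := by omega
    · have := root_lt (b := 1.619) (by norm_num) hp hroot
        (by norm_num only [tmPoly_two])
      norm_num at h this ⊢
      linarith
    · have := root_lt (b := 1.755) (by norm_num) hp hroot
        (by norm_num only [tmPoly_four])
      norm_num at h this ⊢
      linarith
    · have := root_lt (b := 1.7846) (by norm_num) hp hroot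
        (by norm_num only [tmPoly_eight])
      norm_num at h this ⊢
      linarith
  refine ⟨fun hm => ⟨hgap hm, ?_⟩, fun hm => ?_⟩
  · have h3 := hpow 3
    have hpos : 0 < qKL⁻¹ ^ (2 ^ m) := by positivity
    rw [mul_comm]
    gcongr
    exact h3.trans_lt (by norm_num)
  · rcases hm.eq_or_lt with rfl | hm3
    · have := root_lt (b := 1.755) (by norm_num) hp hroot
        (by norm_num only [tmPoly_four])
      have h := hpow 6
      norm_num at h this ⊢
      linarith
    · refine lt_trans ?_ (hgap (by omega))
      obtain ⟨k, rfl⟩ : ∃ k, m = k + 1 := ⟨m - 1, by omega⟩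
      have hk : 4 ≤ 2 ^ k := by
        calc 4 = 2 ^ 2 := by norm_num
          _ ≤ 2 ^ k := Nat.pow_le_pow_right (by norm_num) (by omega)
      have hpos : 0 < qKL⁻¹ ^ (2 ^ (k + 1)) := by positivity
      rw [Nat.add_sub_cancel, show 3 * 2 ^ k = 2 ^ k + 2 ^ (k + 1) by ring, pow_add]
      gcongr
      calc qKL⁻¹ ^ (2 ^ k) ≤ qKL⁻¹ ^ 4 := pow_le_pow_of_le_one hs0.le hs1.le hk
        _ ≤ (1 / 1.7872) ^ 4 := hpow 4
        _ < 0.265 := by norm_num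
end
end

section
/- Let x > 0. (i) If x ≥ q_G^{-k} for some integer k ≥ 1, then for every q ∈ 𝒰(x), the unique q-expansion (d_i)_{i≥1} of x does not begin with k zeros, i.e. there exists i ≤ k with d_i = 1. (ii) If x < q_G^{-1}, then for every q ∈ 𝒰(x) with q ≤ q_KL, the unique q-expansion (d_i)_{i≥1} of x satisfies d_1 = 0. -/
/-!
The only fact about unique expansions that is needed is local: every number in
`[0, 1/(q-1)]` has a `q`-expansion when `1 < q ≤ 2` (`exists_expansion`, by the greedy
algorithm). Hence a digit `0` of a unique expansion cannot be turned into a `1`, which forces the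
value of the tail after it to be `< 1` (`Uniq.tail_lt`), and a digit `1` cannot be
turned into a `0`, which forces the value of the tail after it to be `> 1/(q-1) - 1`
(`Uniq.lt_tail`). Tails of unique expansions are again unique.

For (i), if `d` begins with `k ≥ 1` zeros, the bound on the tail after the `k`-th zero gives
`x < q^{-k}`, so `q < q_G` by hypothesis. On the other hand `x > 0` forces a block `01` somewhere
in `d`, and the two bounds at this block read `1/(q-1) - 1 < q - 1`, i.e. `q > q_G`.

For (ii), if `d` begins with `1`, then `x > 1/(q(q-1))`. Since `τ₃ = τ₅ = τ₆ = 0`, the defining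
equation of `q_KL` gives `1 ≤ 1/(q_KL-1) - 1/8 - 1/32 - 1/64`, hence `q_KL < 1.86`, and so
`q(q-1) < q_G`, i.e. `x > q_G^{-1}`.
-/

open Filter Set

noncomputable section

/-- The value `∑ d_{i+1} q^{-(i+1)}` of a digit sequence in base `q`. -/
def val (q : ℝ) (d : ℕ → ℕ) : ℝ := ∑' i : ℕ, (d i : ℝ) / q ^ (i + 1)

/-- `d` is a 0-1 sequence and the only one with its value in base `q`. -/
def Uniq (q : ℝ) (d : ℕ → ℕ) : Prop :=
  (∀ i, d i ≤ 1) ∧ ∀ e : ℕ → ℕ, (∀ i, e i ≤ 1) → val q e = val q d → e = d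

/-- Prepend the digit `a` to the sequence `e`. -/
def consDigit (a : ℕ) (e : ℕ → ℕ) : ℕ → ℕ
  | 0 => a
  | n + 1 => e n

lemma hasSum_ones {q : ℝ} (hq : 1 < q) :
    HasSum (fun i : ℕ => (1 : ℝ) / q ^ (i + 1)) (1 / (q - 1)) := by
  have h0 : 0 < q := by linarith
  have h := (hasSum_geometric_of_lt_one (inv_nonneg.2 h0.le) (inv_lt_one_of_one_lt₀ hq)).mul_left
    q⁻¹
  have e1 : q⁻¹ * (1 - q⁻¹)⁻¹ = 1 / (q - 1) := by
    rw [← mul_inv, mul_sub, mul_one, mul_inv_cancel₀ h0.ne', one_div]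
  rw [e1] at h
  have e2 : (fun i : ℕ => (1 : ℝ) / q ^ (i + 1)) = fun i => q⁻¹ * q⁻¹ ^ i := by
    ext i
    rw [← pow_succ', inv_pow, one_div]
  rwa [e2]

lemma digit_le {q : ℝ} (hq : 1 < q) {d : ℕ → ℕ} (hd : ∀ i, d i ≤ 1) (i : ℕ) :
    (d i : ℝ) / q ^ (i + 1) ≤ 1 / q ^ (i + 1) := by
  have h0 : 0 < q := by linarith
  have : (d i : ℝ) ≤ 1 := by exact_mod_cast hd i
  gcongr

lemma summable_digits {q : ℝ} (hq : 1 < q) {d : ℕ → ℕ} (hd : ∀ i, d i ≤ 1) :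
    Summable (fun i : ℕ => (d i : ℝ) / q ^ (i + 1)) :=
  have h0 : 0 < q := by linarith
  Summable.of_nonneg_of_le (fun i => by positivity) (digit_le hq hd) (hasSum_ones hq).summable

lemma val_nonneg {q : ℝ} (hq : 1 < q) (d : ℕ → ℕ) : 0 ≤ val q d :=
  have h0 : 0 < q := by linarith
  tsum_nonneg fun i => by positivity

lemma val_le {q : ℝ} (hq : 1 < q) {d : ℕ → ℕ} (hd : ∀ i, d i ≤ 1) : val q d ≤ 1 / (q - 1) := by
  rw [← (hasSum_ones hq).tsum_eq]
  exact (summable_digits hq hd).tsum_le_tsum (digit_le hq hd) (hasSum_ones hq).summable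

lemma val_succ {q : ℝ} (hq : 1 < q) {d : ℕ → ℕ} (hd : ∀ i, d i ≤ 1) :
    q * val q d = d 0 + val q (fun i => d (i + 1)) := by
  have h0 : 0 < q := by linarith
  have h := (summable_digits hq hd).tsum_eq_zero_add
  have h2 : ∀ i : ℕ, (d (i + 1) : ℝ) / q ^ (i + 1 + 1) = q⁻¹ * (d (i + 1) / q ^ (i + 1)) := by
    intro i
    rw [pow_succ q (i + 1)]
    field_simp
  simp only [h2, tsum_mul_left] at h
  rw [val, h, val, zero_add, pow_one, mul_add, mul_div_cancel₀ _ h0.ne', ← mul_assoc,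
    mul_inv_cancel₀ h0.ne', one_mul]

/-- The orbit of `y` under the greedy algorithm in base `q`. -/
def orbit (q y : ℝ) : ℕ → ℝ
  | 0 => y
  | n + 1 => if 1 ≤ q * orbit q y n then q * orbit q y n - 1 else q * orbit q y n

/-- Existence of expansions: the greedy digits work, since the orbit stays in `[0, 1/(q-1)]`. -/
lemma exists_expansion {q y : ℝ} (hq : 1 < q) (hq2 : q ≤ 2) (hy : 0 ≤ y) (hy1 : y ≤ 1 / (q - 1)) :
    ∃ e : ℕ → ℕ, (∀ i, e i ≤ 1) ∧ val q e = y := by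
  have h0 : 0 < q := by linarith
  have h1 : 0 < q - 1 := by linarith
  have hb : ∀ n, 0 ≤ orbit q y n ∧ orbit q y n ≤ 1 / (q - 1) := by
    intro n
    induction n with
    | zero => exact ⟨hy, hy1⟩
    | succ n ih =>
      obtain ⟨ha, hb⟩ := ih
      rw [le_div_iff₀ h1] at hb ⊢
      simp only [orbit]
      split_ifs with h
      · exact ⟨by linarith, by nlinarith⟩
      · exact ⟨by positivity, by nlinarith⟩
  let e : ℕ → ℕ := fun n => if 1 ≤ q * orbit q y n then 1 else 0
  have he : ∀ i, e i ≤ 1 := fun i => by simp only [e]; split_ifs <;> simp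
  refine ⟨e, he, ?_⟩
  have hstep : ∀ n, orbit q y (n + 1) = q * orbit q y n - e n := by
    intro n
    simp only [e, orbit]
    split_ifs <;> simp
  have hpart : ∀ n, ∑ i ∈ Finset.range n, (e i : ℝ) / q ^ (i + 1) = y - orbit q y n / q ^ n := by
    intro n
    induction n with
    | zero => simp [orbit]
    | succ n ih =>
      rw [Finset.sum_range_succ, ih, hstep, pow_succ]
      field_simp
      ring
  have ht : Tendsto (fun n => orbit q y n / q ^ n) atTop (nhds 0) := by
    have hg : Tendsto (fun n : ℕ => 1 / (q - 1) * (q⁻¹) ^ n) atTop (nhds 0) := by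
      simpa using (tendsto_pow_atTop_nhds_zero_of_lt_one (inv_nonneg.2 h0.le)
        (inv_lt_one_of_one_lt₀ hq)).const_mul (1 / (q - 1))
    refine squeeze_zero (fun n => div_nonneg (hb n).1 (by positivity)) (fun n => ?_) hg
    rw [inv_pow, ← div_eq_mul_inv]
    exact div_le_div_of_nonneg_right (hb n).2 (by positivity)
  have hs := (summable_digits hq he).hasSum.tendsto_sum_nat
  simp only [hpart] at hs
  exact tendsto_nhds_unique hs (by simpa using ht.const_sub y)

lemma consDigit_le {a : ℕ} {e : ℕ → ℕ} (ha : a ≤ 1) (he : ∀ i, e i ≤ 1) (i : ℕ) :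
    consDigit a e i ≤ 1 := by
  cases i
  exacts [ha, he _]

lemma val_consDigit {q : ℝ} (hq : 1 < q) {a : ℕ} {e : ℕ → ℕ} (ha : a ≤ 1) (he : ∀ i, e i ≤ 1) :
    q * val q (consDigit a e) = a + val q e :=
  val_succ hq (consDigit_le ha he)

/-- If `a + y` is the rescaled value of a unique expansion `d`, with `a` a digit and `y` in the
range of admissible values, then `a` is the first digit of `d`. -/
lemma Uniq.digit_eq {q : ℝ} {d : ℕ → ℕ} (h : Uniq q d) (hq : 1 < q) (hq2 : q ≤ 2) {a : ℕ}
    (ha : a ≤ 1) {y : ℝ} (hy : 0 ≤ y) (hy1 : y ≤ 1 / (q - 1)) (hv : q * val q d = a + y) :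
    d 0 = a := by
  obtain ⟨e, he, rfl⟩ := exists_expansion hq hq2 hy hy1
  rw [← val_consDigit hq ha he] at hv
  rw [← h.2 _ (consDigit_le ha he) (mul_left_cancel₀ (by linarith) hv).symm]
  rfl

lemma Uniq.succ {q : ℝ} {d : ℕ → ℕ} (h : Uniq q d) (hq : 1 < q) :
    Uniq q (fun i => d (i + 1)) := by
  refine ⟨fun i => h.1 _, fun e he hv => ?_⟩
  have h1 := val_consDigit hq (h.1 0) he
  rw [hv, ← val_succ hq h.1] at h1
  have h2 := h.2 _ (consDigit_le (h.1 0) he) (mul_left_cancel₀ (by linarith) h1)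
  ext i
  exact congrFun h2 (i + 1)

lemma Uniq.shift {q : ℝ} {d : ℕ → ℕ} (h : Uniq q d) (hq : 1 < q) (n : ℕ) :
    Uniq q (fun i => d (i + n)) := by
  induction n with
  | zero => exact h
  | succ n ih => simpa only [add_right_comm, ← add_assoc] using ih.succ hq

lemma Uniq.tail_lt {q : ℝ} {d : ℕ → ℕ} (h : Uniq q d) (hq : 1 < q) (hq2 : q ≤ 2)
    (hd : d 0 = 0) : val q (fun i => d (i + 1)) < 1 := by
  by_contra! hc
  have hs := val_succ hq h.1
  have hle := val_le hq (h.succ hq).1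
  have := h.digit_eq hq hq2 (a := 1) le_rfl (y := val q (fun i => d (i + 1)) - 1)
    (by linarith) (by linarith) (by rw [hs, hd]; push_cast; ring)
  omega

lemma Uniq.lt_tail {q : ℝ} {d : ℕ → ℕ} (h : Uniq q d) (hq : 1 < q) (hq2 : q ≤ 2)
    (hd : d 0 = 1) : 1 / (q - 1) < 1 + val q (fun i => d (i + 1)) := by
  by_contra! hc
  have hs := val_succ hq h.1
  have hn := val_nonneg hq (fun i => d (i + 1))
  have := h.digit_eq hq hq2 (a := 0) zero_le_one (y := 1 + val q (fun i => d (i + 1)))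
    (by linarith) hc (by rw [hs, hd]; push_cast; ring)
  omega

lemma qG_pos : 0 < qG := by unfold qG; positivity

lemma qG_sq : qG ^ 2 = qG + 1 := by
  have := Real.sq_sqrt (show (0 : ℝ) ≤ 5 by norm_num)
  unfold qG
  nlinarith

/-- A unique expansion containing a block `01` forces `q > q_G`. -/
lemma Uniq.qG_lt {q : ℝ} {d : ℕ → ℕ} (h : Uniq q d) (hq : 1 < q) (hq2 : q ≤ 2)
    (hd0 : d 0 = 0) (hd1 : d 1 = 1) : qG < q := by
  have h1 := h.tail_lt hq hq2 hd0
  have h2 := (h.succ hq).lt_tail hq hq2 hd1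
  have h3 := val_succ hq (h.succ hq).1
  simp only [zero_add, hd1, Nat.cast_one] at h3
  have h4 : 1 / (q - 1) < q := by nlinarith
  rw [div_lt_iff₀ (by linarith)] at h4
  nlinarith [qG_pos, qG_sq]

lemma uniq_of_mem {q x : ℝ} {d : ℕ → ℕ} (h : q ∈ UnivSet x) (hd : IsExpansion q x d) :
    Uniq q d :=
  ⟨hd.1, fun _ he hv => h.2.unique ⟨he, hd.2.trans hv.symm⟩ hd⟩

lemma val_of_zeros {q : ℝ} (hq : 1 < q) {d : ℕ → ℕ} (hd : ∀ i, d i ≤ 1) (k : ℕ)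
    (hz : ∀ i < k, d i = 0) : q ^ k * val q d = val q (fun i => d (i + k)) := by
  induction k with
  | zero => simp
  | succ k ih =>
    have h := val_succ hq (d := fun i => d (i + k)) (fun i => hd _)
    simp only [zero_add, hz k (by omega), Nat.cast_zero, add_right_comm _ 1 k] at h
    rw [pow_succ, mul_right_comm, ih fun i hi => hz i (by omega), mul_comm, h]
    simp only [add_assoc]

/-- Any solution of the equation defining `q_KL` is below `1.86`, because `τ₃ = τ₅ = τ₆ = 0`. -/
lemma qKL_lt {q : ℝ} (hq : 1 < q) (hq2 : q < 2)
    (h : ∑' i : ℕ, (tm (i + 1) : ℝ) / q ^ (i + 1) = 1) : q < 1.86 := by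
  have h0 : 0 < q := by linarith
  have ht : ∀ i, tm (i + 1) ≤ 1 := fun i => by unfold tm; omega
  have hs := summable_digits hq ht
  have ho := hasSum_ones hq
  -- The complementary digits sum to `1/(q-1) - 1`; three of these digits are kept.
  have h1 := (ho.summable.sub hs).sum_le_tsum ({2, 4, 5} : Finset ℕ)
    (fun i _ => sub_nonneg.2 (digit_le hq ht i))
  rw [ho.summable.tsum_sub hs, ho.tsum_eq, h] at h1
  have e3 : tm 3 = 0 := by norm_num [tm]
  have e5 : tm 5 = 0 := by norm_num [tm]
  have e6 : tm 6 = 0 := by norm_num [tm]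
  have hp : ∀ n : ℕ, 1 / (2 : ℝ) ^ n ≤ 1 / q ^ n := fun n => by gcongr
  have p3 := hp 3
  have p5 := hp 5
  have p6 := hp 6
  norm_num [e3, e5, e6] at h1 p3 p5 p6
  by_contra! hc
  have h2 : (q - 1)⁻¹ ≤ (0.86 : ℝ)⁻¹ := by gcongr; linarith
  norm_num at h2
  linarith

/-- (i) if `x ≥ q_G^{-k}`, the unique expansion of `x` in any
base `q ∈ 𝒰(x)` cannot begin with `k` zeros; (ii) if `x < q_G^{-1}`, the unique
expansion of `x` in any base `q ∈ 𝒰(x)` with `q ≤ q_KL` begins with `0`. -/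
theorem expansion_restriction (x : ℝ) (hx : 0 < x) :
    (∀ k : ℕ, 1 ≤ k → qG ^ (-(k : ℤ)) ≤ x →
      ∀ q ∈ UnivSet x, ∀ d : ℕ → ℕ, IsExpansion q x d → ∃ i < k, d i = 1) ∧
    (∀ qKL : ℝ, qKL ∈ Set.Ioo (1 : ℝ) 2 →
      (∑' i : ℕ, (tm (i + 1) : ℝ) / qKL ^ (i + 1) = 1) →
      x < qG ^ (-1 : ℤ) →
      ∀ q ∈ UnivSet x, q ≤ qKL → ∀ d : ℕ → ℕ, IsExpansion q x d → d 0 = 0) := by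
  refine ⟨fun k hk hxk q hq d hd => ?_, fun qKL hKL hsum hxG q hq hle d hd => ?_⟩
  · by_contra! hne
    have hu := uniq_of_mem hq hd
    obtain ⟨hq1, hq2⟩ := hq.1
    have hxv : x = val q d := hd.2
    have hz : ∀ i < k, d i = 0 := fun i hi => by
      have := hne i hi
      have := hd.1 i
      omega
    have hqG : q < qG := by
      obtain ⟨m, rfl⟩ : ∃ m, k = m + 1 := ⟨k - 1, by omega⟩
      have h1 := (hu.shift hq1 m).tail_lt hq1 hq2 (by simpa using hz m (by omega))
      have h2 := val_of_zeros hq1 hd.1 (m + 1) hz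
      simp only [add_right_comm _ 1 m] at h1
      simp only [← add_assoc] at h2
      rw [← h2, ← hxv] at h1
      rw [zpow_neg, zpow_natCast, inv_le_iff_one_le_mul₀' (pow_pos qG_pos _)] at hxk
      exact lt_of_pow_lt_pow_left₀ _ qG_pos.le
        (lt_of_mul_lt_mul_right (h1.trans_le hxk) hx.le)
    have hex : ∃ n, d n ≠ 0 := by
      by_contra! h0
      have : x = 0 := by rw [hxv, val]; simp [h0]
      exact hx.ne' this
    classical
    have hm := Nat.find_spec hex
    have hmin : ∀ n < Nat.find hex, d n = 0 := fun n hn => not_not.1 (Nat.find_min hex hn)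
    generalize Nat.find hex = m at hm hmin
    obtain ⟨n, rfl⟩ : ∃ n, m = n + 1 := by
      cases m with
      | zero => exact absurd (hz 0 (by omega)) hm
      | succ n => exact ⟨n, rfl⟩
    have := (hu.shift hq1 n).qG_lt hq1 hq2 (by simpa using hmin n (by omega)) (by
      have := hd.1 (n + 1)
      rw [add_comm 1 n]
      omega)
    linarith
  · have hu := uniq_of_mem hq hd
    obtain ⟨hq1, hq2⟩ := hq.1
    by_contra hne
    have hd0 : d 0 = 1 := by
      have := hd.1 0
      omega
    have h1 := hu.lt_tail hq1 hq2 hd0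
    have h2 := val_succ hq1 hd.1
    rw [show val q d = x from hd.2.symm, hd0, Nat.cast_one] at h2
    rw [← h2, div_lt_iff₀ (by linarith)] at h1
    have h3 := qKL_lt hKL.1 hKL.2 hsum
    rw [zpow_neg_one, lt_inv_comm₀ hx qG_pos, ← one_div, lt_div_iff₀ hx] at hxG
    -- Here `q (q - 1) < 1.86 * 0.86 < 1.6 < q_G`.
    have h4 : 1.6 < qG := by nlinarith [qG_pos, qG_sq]
    have h5 : q * (q - 1) < 1.6 := by nlinarith
    nlinarith
end
end
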